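/- Define m : ℝ → ℝ by m(θ) = (2/3)·(27 + 20cos θ + cos 2θ)/48 + (1/3)·(33 + 26cos θ + cos 2θ)/60, k(θ) = (3 − 2cos θ − cos 2θ)/3, and G(θ) = √(k(θ)/m(θ)). Then, as θ → 0, G(θ) − θ = O(θ⁷); that is, the optimally-blended C¹ quadratic isogeometric scheme with Lobatto-to-Gauss blending ratio 2 : 1 (blending parameter τ = 2/3) has phase error of order θ⁷, two orders better than the order-θ⁵ phase errors of the Gauss-integrated and Lobatto-integrated schemes individually. -/

import Mathlib

open Real Filter Asymptotics Topology

theorem cos_taylor8 (x : ℝ) (hx : |x| ≤ 1) :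
    |Real.cos x - (1 - x ^ 2 / 2 + x ^ 4 / 24 - x ^ 6 / 720)| ≤ x ^ 8 := by
  have hn : ‖(x : ℂ) * Complex.I‖ = |x| := by simp
  have h := Complex.exp_bound (x := (x : ℂ) * Complex.I) (by rw [hn]; exact hx)
    (n := 8) (by norm_num)
  rw [hn] at h
  have h2 := (Complex.abs_re_le_norm _).trans h
  have e : (Complex.exp ((x : ℂ) * Complex.I)
      - ∑ m ∈ Finset.range 8, ((x : ℂ) * Complex.I) ^ m / (m.factorial : ℂ)).re
      = Real.cos x - (1 - x ^ 2 / 2 + x ^ 4 / 24 - x ^ 6 / 720) := by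
    have e1 : ∑ m ∈ Finset.range 8, ((x : ℂ) * Complex.I) ^ m / (m.factorial : ℂ)
        = ((1 - x ^ 2 / 2 + x ^ 4 / 24 - x ^ 6 / 720 : ℝ) : ℂ)
          + ((x - x ^ 3 / 6 + x ^ 5 / 120 - x ^ 7 / 5040 : ℝ) : ℂ) * Complex.I := by
      have hI := Complex.I_sq
      have h3 : Complex.I ^ 3 = -Complex.I := Complex.I_pow_three
      have h4 : Complex.I ^ 4 = 1 := Complex.I_pow_four
      have h5 : Complex.I ^ 5 = Complex.I := by rw [pow_succ, h4, one_mul]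
      have h6 : Complex.I ^ 6 = -1 := by rw [pow_succ, h5, ← sq, hI]
      have h7 : Complex.I ^ 7 = -Complex.I := by rw [pow_succ, h6]; ring
      simp only [Finset.sum_range_succ, Finset.sum_range_zero, mul_pow, hI, h3, h4, h5, h6, h7,
        Nat.factorial]
      push_cast
      ring
    rw [e1, Complex.sub_re, Complex.exp_ofReal_mul_I_re, Complex.add_re, Complex.ofReal_re,
      Complex.re_ofReal_mul]
    simp
  rw [e] at h2
  have h8 : |x| ^ 8 = x ^ 8 := by
    rw [← abs_pow]; exact abs_of_nonneg (by positivity)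
  rw [h8] at h2
  have hp : 0 ≤ x ^ 8 := by positivity
  refine h2.trans ?_
  norm_num [Nat.factorial]
  nlinarith

/-- Superconvergence of the optimally-blended `C¹` quadratic isogeometric
scheme with Lobatto-to-Gauss blending ratio `2 : 1` (blending parameter
`τ = 2/3`): with mass symbol
`m(θ) = (2/3)(27 + 20cos θ + cos 2θ)/48 + (1/3)(33 + 26cos θ + cos 2θ)/60`
and stiffness symbol `k(θ) = (3 − 2cos θ − cos 2θ)/3`, the discrete frequency
function `G(θ) = √(k(θ)/m(θ))` satisfies `G(θ) − θ = O(θ⁷)` as `θ → 0`, two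
orders better than the `O(θ⁵)` phase errors of the Gauss-integrated and
Lobatto-integrated schemes individually. -/
theorem iga_quadratic_optimal_blending_superconvergence :
    (fun θ : ℝ =>
        Real.sqrt (((3 - 2 * Real.cos θ - Real.cos (2 * θ)) / 3)
            / ((2 / 3) * (27 + 20 * Real.cos θ + Real.cos (2 * θ)) / 48
                + (1 / 3) * (33 + 26 * Real.cos θ + Real.cos (2 * θ)) / 60))
          - θ)
      =O[𝓝[>] (0 : ℝ)] fun θ : ℝ => θ ^ 7 := by
  apply IsBigO.of_bound 2000
  filter_upwards [Ioo_mem_nhdsGT (show (0 : ℝ) < 1 / 2 by norm_num)] with t ht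
  obtain ⟨h0, h1⟩ := ht
  have a1 := cos_taylor8 t (by rw [abs_of_pos h0]; linarith)
  have a2 := cos_taylor8 (2 * t) (by rw [abs_of_pos (by linarith)]; linarith)
  have c1 := Real.neg_one_le_cos t
  have c2 := Real.neg_one_le_cos (2 * t)
  have c3 := Real.cos_le_one t
  have c4 := Real.cos_le_one (2 * t)
  generalize Real.cos t = c at *
  generalize Real.cos (2 * t) = d at *
  set m := (2 / 3) * (27 + 20 * c + d) / 48 + (1 / 3) * (33 + 26 * c + d) / 60 with hm
  have hm1 : 1 / 10 ≤ m := by rw [hm]; linarith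
  have hm0 : 0 < m := by linarith
  have p8 : 0 < t ^ 8 := by positivity
  have key : |(3 - 2 * c - d) / 3 - t ^ 2 * m| ≤ 200 * t ^ 8 := by
    obtain ⟨e, he⟩ : ∃ e, e = c - (1 - t ^ 2 / 2 + t ^ 4 / 24 - t ^ 6 / 720) := ⟨_, rfl⟩
    obtain ⟨f, hf⟩ : ∃ f, f = d - (1 - (2 * t) ^ 2 / 2 + (2 * t) ^ 4 / 24 - (2 * t) ^ 6 / 720) :=
      ⟨_, rfl⟩
    rw [← he] at a1
    rw [← hf] at a2
    have hid : (3 - 2 * c - d) / 3 - t ^ 2 * m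
        = t ^ 8 * (600 / (720 * 360)) - (2 / 3 + t ^ 2 * (152 / 360)) * e
          - (1 / 3 + t ^ 2 * (7 / 360)) * f := by
      rw [hm, he, hf]; ring
    have t2 : t ^ 2 ≤ 1 := by nlinarith
    have t20 : 0 ≤ t ^ 2 := by positivity
    rw [mul_pow] at a2
    have b1 : |(2 / 3 + t ^ 2 * (152 / 360)) * e| ≤ 2 * t ^ 8 := by
      rw [abs_mul, abs_of_nonneg (by positivity)]
      exact mul_le_mul (by linarith) a1 (abs_nonneg _) (by norm_num)
    have b2 : |(1 / 3 + t ^ 2 * (7 / 360)) * f| ≤ (1 / 2) * (2 ^ 8 * t ^ 8) := by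
      rw [abs_mul, abs_of_nonneg (by positivity)]
      exact mul_le_mul (by linarith) a2 (abs_nonneg _) (by norm_num)
    rw [hid]
    rw [abs_le] at b1 b2 ⊢
    constructor <;> linarith [b1.1, b1.2, b2.1, b2.2]
  set A := (3 - 2 * c - d) / 3 / m with hA
  have hAm : (3 - 2 * c - d) / 3 = A * m := by rw [hA]; field_simp
  have hAb : |A - t ^ 2| ≤ 2000 * t ^ 8 := by
    rw [hAm, ← sub_mul, abs_mul, abs_of_pos hm0] at key
    nlinarith [abs_nonneg (A - t ^ 2)]
  have hA0 : 0 ≤ A := by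
    rw [hA]
    apply div_nonneg _ hm0.le
    linarith
  have hs := Real.sq_sqrt hA0
  have hs0 := Real.sqrt_nonneg A
  rw [Real.norm_eq_abs, Real.norm_eq_abs, abs_of_pos (pow_pos h0 7)]
  have : |√A - t| * (√A + t) ≤ 2000 * t ^ 8 := by
    rw [← abs_of_nonneg (show 0 ≤ √A + t by linarith), ← abs_mul]
    have hq : (√A - t) * (√A + t) = A - t ^ 2 := by linear_combination hs
    rw [hq]
    exact hAb
  have h3 : |√A - t| * t ≤ (2000 * t ^ 7) * t := by
    nlinarith [mul_nonneg (abs_nonneg (√A - t)) hs0]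
  exact le_of_mul_le_mul_right h3 h0
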